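/- Soundness of backwards simulations for relative security: Let S, T be types of states, Dₛ, Dₜ types of directives, and Oₛ, Oₜ types of observations, with multi-step execution relations for source (from a state in S, under a list of Dₛ, producing a list of Oₛ) and target (from a state in T, under a list of Dₜ, producing a list of Oₜ), a relation R between S and T, and functions σ : Dₜ → Dₛ and τ : Oₛ → Oₜ. Suppose the backwards simulation property: whenever R s t and the target executes from t under directives D producing observations O, there exists a source execution from s under directives (map σ D) producing observations O' with map τ O' = O. Then relative security follows: if R s1 t1 and R s2 t2 and s1, s2 are observationally equivalent under the source semantics (for every source directive list, any two source traces from s1 and s2 are prefix-comparable), then t1 and t2 are observationally equivalent under the target semantics (for every target directive list, any two target traces from t1 and t2 are prefix-comparable). -/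

import Mathlib

namespace SpecIBTPaper

/-- Soundness of backwards simulations for relative security,
    Theorem 2 of Olmos et al., used for the linearization proof. -/
theorem backwards_simulation_soundness
    {S T Ds Dt Os Ot : Type}
    (srcExec : S → List Ds → List Os → Prop)
    (tgtExec : T → List Dt → List Ot → Prop)
    (R : S → T → Prop) (σ : Dt → Ds) (τ : Os → Ot)
    (bsim : ∀ (s : S) (t : T) (D : List Dt) (O : List Ot),
      R s t → tgtExec t D O → ∃ O' : List Os, srcExec s (D.map σ) O' ∧ O'.map τ = O)
    (s1 s2 : S) (t1 t2 : T)
    (h1 : R s1 t1) (h2 : R s2 t2)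
    (hsrc : ∀ (D : List Ds) (O1 O2 : List Os),
      srcExec s1 D O1 → srcExec s2 D O2 → O1 <+: O2 ∨ O2 <+: O1) :
    ∀ (D : List Dt) (O1 O2 : List Ot),
      tgtExec t1 D O1 → tgtExec t2 D O2 → O1 <+: O2 ∨ O2 <+: O1 := by
  intro D O1 O2 e1 e2
  obtain ⟨P1, f1, rfl⟩ := bsim s1 t1 D O1 h1 e1
  obtain ⟨P2, f2, rfl⟩ := bsim s2 t2 D O2 h2 e2
  exact (hsrc _ P1 P2 f1 f2).imp (fun h => h.map τ) (fun h => h.map τ)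

end SpecIBTPaper
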